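/- Let G be a d-regular graph on n vertices that is bicycle-free at radius r, let 0 < δ ≤ 1/10, and set n₀ = e^{δr−1}. Let H be a connected subgraph of G with at most two vertices of degree one and at most n₀ vertices. Then |excSet(H)| ≤ 2δ·n₀ + 2. -/

import Mathlib

open scoped Classical

noncomputable section

/-- The ball of radius `r` about `v` in `G` (within the connected component of `v`). -/
def gBall {V : Type*} (G : SimpleGraph V) (v : V) (r : ℕ) : Set V :=
  {u | G.Reachable v u ∧ G.dist v u ≤ r}

/-- `G` is bicycle-free at radius `r`: the subgraph induced on every ball of radius `r`
has excess at most `0`, i.e. at most as many edges as vertices. -/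
def BicycleFree {V : Type*} (G : SimpleGraph V) (r : ℕ) : Prop :=
  ∀ v : V,
    (G.edgeSet ∩ {e : Sym2 V | ∀ x ∈ e, x ∈ gBall G v r}).ncard ≤ (gBall G v r).ncard

open scoped Finset

/-!
Let `K` be a minimal violation, among the subgraphs on at most `n₀` vertices, of the density bound
`|E| ≤ (1 + δ)|V|`. By minimality every nonempty vertex set `S` of `K` meets more than
`(1 + δ)|S|` edges. Let `B` and `B'` be consecutive balls of `K`. The edges meeting `B` lie inside
`B'`, hence number at most `|B'|` by bicycle-freeness; this alone gives the growth rate `1 + δ`,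
slightly less than the `exp δ` we need. For the rest, let `t` be the number of vertices of degree
two in the sphere `B' \ B`. Adding them to `B` brings in at most `t` new edges, so `B` already meets
at least `(1 + δ)|B| + δ t` edges, while the degree sum of the sphere is at least `3|B' \ B| - t`.
Eliminating `t` shows that `Z(B) = (1 - 3 δ)|B| + δ ∑ u ∈ B, deg u` increases by at least `δ|B|` per
step, and `Z(B) ≤ (1 - 2 δ)|B| + δ|B'|`. Together these force the balls to grow like `exp (δ k)`,
contradicting `|K| ≤ n₀`.

The number of vertices of degree more than two is then read off from the degree sum.
-/

/-! ### Balls -/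

section Ball

variable {V : Type*} {G : SimpleGraph V} {u v w : V} {k l : ℕ}

lemma mem_gBall_self : v ∈ gBall G v k :=
  ⟨.rfl, by simp⟩

lemma gBall_zero : gBall G v 0 = {v} :=
  Set.Subset.antisymm
    (fun _ hu => (hu.1.dist_eq_zero_iff.1 (Nat.le_zero.1 hu.2)).symm)
    (Set.singleton_subset_iff.2 mem_gBall_self)

lemma gBall_subset_gBall (h : k ≤ l) : gBall G v k ⊆ gBall G v l :=
  fun _ hu => ⟨hu.1, hu.2.trans h⟩

lemma mem_gBall_of_walk (p : G.Walk v u) (hp : p.length ≤ k) : u ∈ gBall G v k :=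
  ⟨p.reachable, (G.dist_le p).trans hp⟩

lemma exists_walk_of_mem_gBall (hu : u ∈ gBall G v k) : ∃ p : G.Walk v u, p.length ≤ k := by
  obtain ⟨p, hp⟩ := hu.1.exists_walk_length_eq_dist
  exact ⟨p, hp.trans_le hu.2⟩

lemma mem_gBall_succ_of_adj (hu : u ∈ gBall G v k) (huw : G.Adj u w) : w ∈ gBall G v (k + 1) := by
  obtain ⟨p, hp⟩ := exists_walk_of_mem_gBall hu
  exact mem_gBall_of_walk (p.concat huw) (by simpa using hp)

lemma map_mem_gBall {V' : Type*} {K : SimpleGraph V'} {x y : V'} (f : K →g G)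
    (hy : y ∈ gBall K x k) : f y ∈ gBall G (f x) k := by
  obtain ⟨p, hp⟩ := exists_walk_of_mem_gBall hy
  exact mem_gBall_of_walk (p.map f) (by simpa using hp)

lemma exists_adj_dist_lt (hvu : G.Reachable v u) (hne : u ≠ v) :
    ∃ w, G.Adj u w ∧ G.Reachable v w ∧ G.dist v w < G.dist v u := by
  obtain ⟨p, hp⟩ := hvu.symm.exists_walk_length_eq_dist
  cases p with
  | nil => exact absurd rfl hne
  | @cons _ w _ huw q =>
    have hq : G.dist v w ≤ q.length := G.dist_comm ▸ G.dist_le q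
    rw [SimpleGraph.Walk.length_cons, G.dist_comm] at hp
    exact ⟨w, huw, q.reachable.symm, by omega⟩

lemma exists_adj_mem_gBall (hu : u ∈ gBall G v (k + 1)) (hu' : u ∉ gBall G v k) :
    ∃ w ∈ gBall G v k, G.Adj u w := by
  obtain ⟨w, huw, hvw, hlt⟩ := exists_adj_dist_lt hu.1 fun h => hu' (h ▸ mem_gBall_self)
  exact ⟨w, ⟨hvw, Nat.le_of_lt_succ (hlt.trans_le hu.2)⟩, huw⟩

lemma finite_gBall [G.LocallyFinite] (v : V) (k : ℕ) : (gBall G v k).Finite := by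
  induction k with
  | zero => exact gBall_zero ▸ Set.finite_singleton v
  | succ k ih =>
    refine (ih.union (ih.biUnion fun w _ => (G.neighborSet w).toFinite)).subset fun u hu => ?_
    by_cases hu' : u ∈ gBall G v k
    · exact .inl hu'
    · obtain ⟨w, hw, huw⟩ := exists_adj_mem_gBall hu hu'
      exact .inr (Set.mem_biUnion hw huw.symm)

end Ball

/-! ### Edges inside and edges meeting a vertex set -/

section EdgeCount

variable {V : Type*} {G : SimpleGraph V}

/-- The edges of `G` with both endpoints in `S`. The set is written as in `BicycleFree`. -/
def edgesWithin (G : SimpleGraph V) (S : Set V) : Set (Sym2 V) :=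
  G.edgeSet ∩ {e | ∀ x ∈ e, x ∈ S}

/-- The edges of `G` with at least one endpoint in `S`. -/
def edgesMeeting (G : SimpleGraph V) (S : Set V) : Set (Sym2 V) :=
  G.edgeSet ∩ {e | ∃ x ∈ e, x ∈ S}

lemma finite_edgesWithin {S : Set V} (hS : S.Finite) : (edgesWithin G S).Finite :=
  hS.toFinset.sym2.finite_toSet.subset fun _ he =>
    Finset.mem_sym2_iff.2 fun x hx => hS.mem_toFinset.2 (he.2 x hx)

lemma ncard_edgesWithin_le_of_injective {V' : Type*} {K : SimpleGraph V'} (f : K →g G)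
    (hf : Function.Injective f) {S : Set V'} (hS : S.Finite) :
    (edgesWithin K S).ncard ≤ (edgesWithin G (f '' S)).ncard := by
  rw [← Set.ncard_image_of_injective _ (Sym2.map.injective hf)]
  refine Set.ncard_le_ncard ?_ (finite_edgesWithin (hS.image f))
  rintro _ ⟨e, he, rfl⟩
  refine ⟨f.map_mem_edgeSet he.1, fun x hx => ?_⟩
  obtain ⟨y, hy, rfl⟩ := Sym2.mem_map.1 hx
  exact Set.mem_image_of_mem f (he.2 y hy)

lemma ncard_edgeSet_induce (G : SimpleGraph V) (S : Set V) :
    (G.induce S).edgeSet.ncard = (edgesWithin G S).ncard := by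
  rw [← Set.ncard_image_of_injective _ (Sym2.map.injective Subtype.val_injective)]
  congr 1
  ext e
  induction e with | _ x y
  constructor
  · rintro ⟨e, he, hxy⟩
    induction e with | _ a b
    rw [← hxy]
    exact ⟨he, by simp⟩
  · rintro ⟨hxy, hS⟩
    exact ⟨s(⟨x, hS x (by simp)⟩, ⟨y, hS y (by simp)⟩), hxy, rfl⟩

lemma ncard_edgeSet_eq_edgesMeeting_add_edgesWithin_compl [Finite V] (G : SimpleGraph V)
    (S : Set V) :
    G.edgeSet.ncard = (edgesMeeting G S).ncard + (edgesWithin G Sᶜ).ncard := by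
  have hdisj : Disjoint (edgesMeeting G S) (edgesWithin G Sᶜ) :=
    Set.disjoint_left.2 fun _ ⟨_, x, hx, hxS⟩ he => he.2 x hx hxS
  rw [← Set.ncard_union_eq hdisj (Set.toFinite _) (Set.toFinite _), edgesMeeting, edgesWithin,
    ← Set.inter_union_distrib_left, Set.inter_eq_left.2]
  intro e _
  simp only [Set.mem_union, Set.mem_ofPred_eq, Set.mem_compl_iff]
  grind

lemma card_filter_mem_edge {e : Sym2 V} (he : e ∈ G.edgeSet) (S : Finset V) :
    #{u ∈ S | u ∈ e} =
      (if ∀ x ∈ e, x ∈ S then 1 else 0) + (if ∃ x ∈ e, x ∈ S then 1 else 0) := by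
  induction e with | _ x y
  have hne : x ≠ y := G.ne_of_adj he
  have hswap : ({u ∈ S | u ∈ s(x, y)} : Finset V) = {u ∈ ({x, y} : Finset V) | u ∈ S} := by
    ext u
    simp [and_comm]
  rw [hswap, Finset.filter_insert, Finset.filter_singleton]
  by_cases hx : x ∈ S <;> by_cases hy : y ∈ S <;> simp [hx, hy, hne]

variable [Fintype V]

lemma ncard_edgesMeeting_singleton (u : V) : (edgesMeeting G {u}).ncard = G.degree u := by
  rw [← G.card_incidenceFinset_eq_degree, ← Set.ncard_coe_finset, G.coe_incidenceFinset]
  congr 1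
  ext e
  simp [edgesMeeting, SimpleGraph.incidenceSet]

lemma sum_degree_eq (S : Finset V) :
    ∑ u ∈ S, G.degree u = (edgesWithin G S).ncard + (edgesMeeting G S).ncard := by
  have hwithin : edgesWithin G S = ↑{e ∈ G.edgeFinset | ∀ x ∈ e, x ∈ S} := by
    ext; simp [edgesWithin]
  have hmeeting : edgesMeeting G S = ↑{e ∈ G.edgeFinset | ∃ x ∈ e, x ∈ S} := by
    ext; simp [edgesMeeting]
  calc ∑ u ∈ S, G.degree u
      = ∑ u ∈ S, #{e ∈ G.edgeFinset | u ∈ e} := by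
        simp only [← G.card_incidenceFinset_eq_degree, G.incidenceFinset_eq_filter]
    _ = ∑ e ∈ G.edgeFinset, #{u ∈ S | u ∈ e} :=
        Finset.sum_card_bipartiteAbove_eq_sum_card_bipartiteBelow _
    _ = ∑ e ∈ G.edgeFinset, ((if ∀ x ∈ e, x ∈ S then 1 else 0) +
          (if ∃ x ∈ e, x ∈ S then 1 else 0)) :=
        Finset.sum_congr rfl fun e he => by
          convert card_filter_mem_edge (SimpleGraph.mem_edgeFinset.1 he) S
    _ = (edgesWithin G S).ncard + (edgesMeeting G S).ncard := by
        rw [Finset.sum_add_distrib, ← Finset.card_filter, ← Finset.card_filter, hwithin,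
          hmeeting, Set.ncard_coe_finset, Set.ncard_coe_finset]

lemma ncard_edgesMeeting_union_le {B T : Finset V} (hdeg : ∀ u ∈ T, G.degree u ≤ 2)
    (hadj : ∀ u ∈ T, ∃ w ∈ B, G.Adj u w) :
    (edgesMeeting G ↑(B ∪ T)).ncard ≤ (edgesMeeting G B).ncard + #T := by
  choose! p hpB hp using hadj
  set newEdges : Finset (Sym2 V) := T.biUnion fun u => (G.incidenceFinset u).erase s(u, p u)
  have hnew : #newEdges ≤ #T := by
    refine (Finset.card_biUnion_le_card_mul T _ 1 fun u hu => ?_).trans_eq (mul_one _)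
    rw [Finset.card_erase_of_mem (by simpa using hp u hu), G.card_incidenceFinset_eq_degree]
    have := hdeg u hu
    omega
  have hsub : edgesMeeting G ↑(B ∪ T) ⊆ edgesMeeting G B ∪ newEdges := by
    rintro e ⟨he, u, hue, hu⟩
    refine or_iff_not_imp_left.2 fun heB => ?_
    have huT : u ∈ T :=
      (Finset.mem_union.1 hu).resolve_left fun huB => heB ⟨he, u, hue, huB⟩
    refine Finset.mem_biUnion.2 ⟨u, huT, Finset.mem_erase.2 ⟨?_, ?_⟩⟩
    · rintro rfl
      exact heB ⟨he, p u, Sym2.mem_mk_right u (p u), hpB u huT⟩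
    · exact (G.mem_incidenceFinset u e).2 ⟨he, hue⟩
  calc (edgesMeeting G ↑(B ∪ T)).ncard
      ≤ (edgesMeeting G B ∪ newEdges).ncard := Set.ncard_le_ncard hsub (Set.toFinite _)
    _ ≤ (edgesMeeting G B).ncard + (newEdges : Set (Sym2 V)).ncard := Set.ncard_union_le _ _
    _ ≤ (edgesMeeting G B).ncard + #T := by
        rw [Set.ncard_coe_finset]
        gcongr

end EdgeCount

/-! ### Bicycle-freeness is hereditary -/

namespace BicycleFree

variable {V : Type*} {G : SimpleGraph V} {r : ℕ}

-- Joining each vertex of the ball outside `B` to a neighbour closer to `v` uses one new edge per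
-- vertex, so the excess of `B` is at most that of the ball.
lemma ncard_edgesWithin_le [G.LocallyFinite] (hG : BicycleFree G r) {v : V} {B : Set V}
    (hv : v ∈ B) (hB : B ⊆ gBall G v r) : (edgesWithin G B).ncard ≤ B.ncard := by
  have hfin : (gBall G v r).Finite := finite_gBall v r
  have hparent : ∀ u ∈ gBall G v r \ B,
      ∃ w, G.Adj u w ∧ G.Reachable v w ∧ G.dist v w < G.dist v u := fun u hu =>
    exists_adj_dist_lt hu.1.1 fun h => hu.2 (h ▸ hv)
  choose! p hadj hreach hlt using hparent
  set parentEdges : Set (Sym2 V) := (fun u => s(u, p u)) '' (gBall G v r \ B)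
  have hsub : edgesWithin G B ∪ parentEdges ⊆ edgesWithin G (gBall G v r) := by
    rintro e (he | ⟨u, hu, rfl⟩)
    · exact ⟨he.1, fun x hx => hB (he.2 x hx)⟩
    · refine ⟨hadj u hu, fun x hx => ?_⟩
      rcases Sym2.mem_iff.1 hx with rfl | rfl
      · exact hu.1
      · exact ⟨hreach u hu, (hlt u hu).le.trans hu.1.2⟩
  have hdisj : Disjoint (edgesWithin G B) parentEdges := by
    rw [Set.disjoint_left]
    rintro _ he ⟨u, hu, rfl⟩
    exact hu.2 (he.2 u (Sym2.mem_mk_left u (p u)))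
  have hinj : Set.InjOn (fun u => s(u, p u)) (gBall G v r \ B) := by
    intro a ha b hb hab
    rcases Sym2.eq_iff.1 hab with ⟨h, -⟩ | ⟨hab, hba⟩
    · exact h
    · have ha' := hlt a ha
      have hb' := hlt b hb
      rw [hba] at ha'
      rw [← hab] at hb'
      omega
  have hcount : (edgesWithin G B).ncard + (gBall G v r \ B).ncard ≤ (gBall G v r).ncard := by
    rw [← hinj.ncard_image, ← Set.ncard_union_eq hdisj
      (finite_edgesWithin (hfin.subset hB)) (hfin.sdiff.image _)]
    exact (Set.ncard_le_ncard hsub (finite_edgesWithin hfin)).trans (hG v)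
  have hsplit := Set.ncard_sdiff_add_ncard_of_subset hB hfin
  omega

lemma of_injective [G.LocallyFinite] (hG : BicycleFree G r) {V' : Type*} {K : SimpleGraph V'}
    (f : K →g G) (hf : Function.Injective f) : BicycleFree K r := by
  intro v
  have hsub : f '' gBall K v r ⊆ gBall G (f v) r :=
    Set.image_subset_iff.2 fun _ hu => map_mem_gBall f hu
  have hfin : (gBall K v r).Finite := ((finite_gBall (f v) r).subset hsub).of_finite_image hf.injOn
  calc (edgesWithin K (gBall K v r)).ncard
      ≤ (edgesWithin G (f '' gBall K v r)).ncard := ncard_edgesWithin_le_of_injective f hf hfin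
    _ ≤ (f '' gBall K v r).ncard :=
        hG.ncard_edgesWithin_le (Set.mem_image_of_mem f mem_gBall_self) hsub
    _ = (gBall K v r).ncard := Set.ncard_image_of_injective _ hf

lemma mono [G.LocallyFinite] {k : ℕ} (hG : BicycleFree G r) (hk : k ≤ r) : BicycleFree G k :=
  fun _ => hG.ncard_edgesWithin_le mem_gBall_self (gBall_subset_gBall hk)

lemma ncard_edgesMeeting_gBall_le [G.LocallyFinite] {k : ℕ} (hG : BicycleFree G (k + 1)) (v : V) :
    (edgesMeeting G (gBall G v k)).ncard ≤ (gBall G v (k + 1)).ncard := by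
  refine (Set.ncard_le_ncard ?_ (finite_edgesWithin (finite_gBall v _))).trans (hG v)
  rintro e ⟨he, x, hx, hxB⟩
  obtain ⟨y, rfl⟩ := Sym2.mem_iff_exists.1 hx
  refine ⟨he, fun z hz => ?_⟩
  rcases Sym2.mem_iff.1 hz with rfl | rfl
  · exact gBall_subset_gBall k.le_succ hxB
  · exact mem_gBall_succ_of_adj hxB he

end BicycleFree

/-! ### Exponential growth of balls -/

section Growth

variable {δ : ℝ}

lemma exp_sub_one_mul_le (hδ0 : 0 ≤ δ) (hδ1 : δ ≤ 1 / 10) :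
    (Real.exp δ - 1) * (1 - 2 * δ + δ * Real.exp δ) ≤ δ := by
  have hexp : Real.exp δ ≤ 1 + δ + 3 / 4 * δ ^ 2 := by
    have h := Real.exp_bound' hδ0 (by linarith) two_pos
    norm_num [Finset.sum_range, Fin.sum_univ_two] at h
    linarith
  calc (Real.exp δ - 1) * (1 - 2 * δ + δ * Real.exp δ)
      ≤ (1 + δ + 3 / 4 * δ ^ 2 - 1) * (1 - 2 * δ + δ * (1 + δ + 3 / 4 * δ ^ 2)) := by
        gcongr
        · nlinarith [Real.exp_pos δ]
        · nlinarith
    _ = δ - δ ^ 2 * (1 / 4 - δ / 4 - 3 / 2 * δ ^ 2 - 9 / 16 * δ ^ 3) := by ring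
    _ ≤ δ := by
        have hδ2 : δ ^ 2 ≤ (1 / 10) ^ 2 := by gcongr
        have hδ3 : δ ^ 3 ≤ (1 / 10) ^ 3 := by gcongr
        have : 0 ≤ 1 / 4 - δ / 4 - 3 / 2 * δ ^ 2 - 9 / 16 * δ ^ 3 := by linarith
        nlinarith [sq_nonneg δ]

-- The potential `Z k + (exp δ - 1) δ b k` grows by the factor `exp δ` in each step.
lemma exp_mul_le_add_of_recurrence (hδ0 : 0 ≤ δ) (hδ1 : δ ≤ 1 / 10) {b Z : ℕ → ℝ} {m : ℕ}
    (hb : ∀ k, 0 ≤ b k) (hstep : ∀ k < m, Z k + δ * b k ≤ Z (k + 1))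
    (hupper : ∀ k < m, Z k ≤ (1 - 2 * δ) * b k + δ * b (k + 1)) :
    Real.exp (δ * m) * Z 0 ≤ Z m + (Real.exp δ - 1) * δ * b m := by
  have hq : 0 ≤ Real.exp δ - 1 := sub_nonneg.2 (Real.one_le_exp hδ0)
  induction m with
  | zero => simpa using mul_nonneg (mul_nonneg hq hδ0) (hb 0)
  | succ m ih =>
    have hprev := ih (fun k hk => hstep k (hk.trans m.lt_succ_self))
      fun k hk => hupper k (hk.trans m.lt_succ_self)
    have hZ := mul_le_mul_of_nonneg_left (hupper m m.lt_succ_self) hq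
    have hbm := mul_le_mul_of_nonneg_right (exp_sub_one_mul_le hδ0 hδ1) (hb m)
    calc Real.exp (δ * (m + 1 : ℕ)) * Z 0
        = Real.exp δ * (Real.exp (δ * m) * Z 0) := by
          rw [← mul_assoc, ← Real.exp_add]
          push_cast
          ring_nf
      _ ≤ Real.exp δ * (Z m + (Real.exp δ - 1) * δ * b m) := by gcongr
      _ ≤ Z m + δ * b m + (Real.exp δ - 1) * δ * b (m + 1) := by linarith
      _ ≤ Z (m + 1) + (Real.exp δ - 1) * δ * b (m + 1) := by
          gcongr
          exact hstep m m.lt_succ_self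

lemma exp_mul_le_of_recurrence (hδ0 : 0 ≤ δ) (hδ1 : δ ≤ 1 / 10) {b Z : ℕ → ℝ} {m : ℕ}
    (hb : ∀ k, 0 ≤ b k) (hbm : b m ≤ b (m + 1)) (hstep : ∀ k < m, Z k + δ * b k ≤ Z (k + 1))
    (hupper : ∀ k ≤ m, Z k ≤ (1 - 2 * δ) * b k + δ * b (k + 1)) :
    Real.exp (δ * m) * Z 0 ≤ b (m + 1) := by
  have hexp : Real.exp δ - 1 ≤ 1 := by
    have h := Real.abs_exp_sub_one_le (x := δ) (by rw [abs_of_nonneg hδ0]; linarith)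
    rw [abs_of_nonneg hδ0] at h
    linarith [le_abs_self (Real.exp δ - 1)]
  calc Real.exp (δ * m) * Z 0
      ≤ Z m + (Real.exp δ - 1) * δ * b m :=
        exp_mul_le_add_of_recurrence hδ0 hδ1 hb hstep fun k hk => hupper k hk.le
    _ ≤ (1 - 2 * δ) * b m + δ * b (m + 1) + 1 * δ * b m := by
        gcongr
        · exact hupper m le_rfl
        · exact hb m
    _ = (1 - δ) * b m + δ * b (m + 1) := by ring
    _ ≤ (1 - δ) * b (m + 1) + δ * b (m + 1) := by
        gcongr
        linarith
    _ = b (m + 1) := by ring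

variable {V : Type*} {G : SimpleGraph V}

/-- Every nonempty finite vertex set `S` meets more than `c|S|` edges; the property of a minimal
graph with more than `c|V|` edges that makes its balls grow. -/
def EdgeExpanding (G : SimpleGraph V) (c : ℝ) : Prop :=
  ∀ S : Finset V, S.Nonempty → c * #S < (edgesMeeting G S).ncard

section Potential

variable [Fintype V]

/-- The quantity `Z(S) = (1 - 3δ)|S| + δ ∑ u ∈ S, deg u`, whose increments along consecutive balls
do not involve the number of vertices of degree two. -/
def degreePotential (G : SimpleGraph V) (δ : ℝ) (S : Finset V) : ℝ :=
  (1 - 3 * δ) * #S + δ * ∑ u ∈ S, (G.degree u : ℝ)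

lemma EdgeExpanding.two_le_degree {c : ℝ} (hc : 1 ≤ c) (hG : EdgeExpanding G c) (u : V) :
    2 ≤ G.degree u := by
  have h := hG {u} (Finset.singleton_nonempty u)
  rw [Finset.coe_singleton, ncard_edgesMeeting_singleton, Finset.card_singleton] at h
  exact_mod_cast (show (1 : ℝ) < G.degree u by push_cast at h; linarith)

lemma three_mul_card_le_sum_degree_add {S : Finset V} (hdeg : ∀ u ∈ S, 2 ≤ G.degree u) :
    3 * #S ≤ ∑ u ∈ S, G.degree u + #{u ∈ S | G.degree u ≤ 2} := by
  rw [Finset.card_filter, ← Finset.sum_add_distrib, mul_comm, ← smul_eq_mul]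
  refine Finset.card_nsmul_le_sum _ _ _ fun u hu => ?_
  have := hdeg u hu
  split_ifs <;> omega

lemma EdgeExpanding.card_add_le_ncard_edgesMeeting (hG : EdgeExpanding G (1 + δ))
    {B T : Finset V} (hB : B.Nonempty) (hBT : Disjoint B T) (hdeg : ∀ u ∈ T, G.degree u ≤ 2)
    (hadj : ∀ u ∈ T, ∃ w ∈ B, G.Adj u w) :
    (1 + δ) * #B + δ * #T ≤ (edgesMeeting G B).ncard := by
  have hunion := hG (B ∪ T) (hB.mono Finset.subset_union_left)
  have hle : ((edgesMeeting G ↑(B ∪ T)).ncard : ℝ) ≤ (edgesMeeting G B).ncard + #T :=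
    mod_cast ncard_edgesMeeting_union_le hdeg hadj
  rw [Finset.card_union_of_disjoint hBT, Nat.cast_add] at hunion
  linarith

lemma EdgeExpanding.degreePotential_add_le (hδ0 : 0 ≤ δ) (hG : EdgeExpanding G (1 + δ))
    {B B' : Finset V} (hB : B.Nonempty) (hBB' : B ⊆ B')
    (hadj : ∀ u ∈ B' \ B, ∃ w ∈ B, G.Adj u w) (hmeet : (edgesMeeting G B).ncard ≤ #B') :
    degreePotential G δ B + δ * #B ≤ degreePotential G δ B' := by
  set T : Finset V := {u ∈ B' \ B | G.degree u ≤ 2}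
  have hTsub : T ⊆ B' \ B := Finset.filter_subset _ _
  have hexpand : (1 + δ) * #B + δ * #T ≤ (edgesMeeting G B).ncard :=
    hG.card_add_le_ncard_edgesMeeting hB (Finset.disjoint_sdiff.mono_right hTsub)
      (fun u hu => (Finset.mem_filter.1 hu).2) fun u hu => hadj u (hTsub hu)
  have hsphere : 3 * (#(B' \ B) : ℝ) ≤ ∑ u ∈ B' \ B, (G.degree u : ℝ) + #T := by
    exact_mod_cast three_mul_card_le_sum_degree_add
      fun u _ => hG.two_le_degree (le_add_of_nonneg_right hδ0) u
  have hcard : (#(B' \ B) : ℝ) = #B' - #B := Finset.cast_card_sdiff hBB'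
  have hsum := Finset.sum_sdiff (f := fun u => (G.degree u : ℝ)) hBB'
  have hmeet' : ((edgesMeeting G B).ncard : ℝ) ≤ #B' := mod_cast hmeet
  have hsphere' := mul_le_mul_of_nonneg_left hsphere hδ0
  rw [degreePotential, degreePotential, ← hsum]
  rw [hcard] at hsphere'
  linarith

lemma degreePotential_le (hδ0 : 0 ≤ δ) {B : Finset V} {c : ℕ}
    (hwithin : (edgesWithin G B).ncard ≤ #B) (hmeet : (edgesMeeting G B).ncard ≤ c) :
    degreePotential G δ B ≤ (1 - 2 * δ) * #B + δ * c := by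
  have hsum : ∑ u ∈ B, (G.degree u : ℝ) ≤ #B + c := by
    exact_mod_cast (sum_degree_eq B).trans_le (add_le_add hwithin hmeet)
  have := mul_le_mul_of_nonneg_left hsum hδ0
  rw [degreePotential]
  linarith

lemma EdgeExpanding.degreePotential_gBall_add_le (hδ0 : 0 ≤ δ) (hG : EdgeExpanding G (1 + δ))
    {k : ℕ} (hbf : BicycleFree G (k + 1)) (v : V) :
    degreePotential G δ (gBall G v k).toFinset + δ * (gBall G v k).ncard ≤
      degreePotential G δ (gBall G v (k + 1)).toFinset := by
  rw [Set.ncard_eq_toFinset_card']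
  refine hG.degreePotential_add_le hδ0 ⟨v, Set.mem_toFinset.2 mem_gBall_self⟩
    (Set.toFinset_subset_toFinset.2 (gBall_subset_gBall k.le_succ)) (fun u hu => ?_) ?_
  · rw [← Set.toFinset_sdiff, Set.mem_toFinset] at hu
    obtain ⟨w, hw, huw⟩ := exists_adj_mem_gBall hu.1 hu.2
    exact ⟨w, Set.mem_toFinset.2 hw, huw⟩
  · rw [← Set.ncard_eq_toFinset_card', Set.coe_toFinset]
    exact hbf.ncard_edgesMeeting_gBall_le v

lemma BicycleFree.degreePotential_gBall_le (hδ0 : 0 ≤ δ) {k : ℕ} (hbf : BicycleFree G (k + 1))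
    (v : V) :
    degreePotential G δ (gBall G v k).toFinset ≤
      (1 - 2 * δ) * (gBall G v k).ncard + δ * (gBall G v (k + 1)).ncard := by
  rw [Set.ncard_eq_toFinset_card' (gBall G v k)]
  refine degreePotential_le hδ0 ?_ ?_
  · rw [← Set.ncard_eq_toFinset_card', Set.coe_toFinset]
    exact hbf.mono k.le_succ v
  · rw [Set.coe_toFinset]
    exact hbf.ncard_edgesMeeting_gBall_le v

lemma EdgeExpanding.le_degreePotential_gBall_zero (hδ0 : 0 ≤ δ) (hG : EdgeExpanding G (1 + δ))
    (v : V) : 1 - δ ≤ degreePotential G δ (gBall G v 0).toFinset := by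
  have hdeg : (2 : ℝ) ≤ G.degree v := mod_cast hG.two_le_degree (le_add_of_nonneg_right hδ0) v
  simp only [degreePotential, gBall_zero, Set.toFinset_singleton, Finset.card_singleton,
    Nat.cast_one, Finset.sum_singleton]
  nlinarith

end Potential

theorem EdgeExpanding.exp_mul_le_ncard_gBall [Finite V] (hδ0 : 0 ≤ δ) (hδ1 : δ ≤ 1 / 10)
    (hG : EdgeExpanding G (1 + δ)) {m : ℕ} (hbf : BicycleFree G (m + 1)) (v : V) :
    (1 - δ) * Real.exp (δ * m) ≤ (gBall G v (m + 1)).ncard := by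
  have := Fintype.ofFinite V
  have hbf' (k : ℕ) (hk : k ≤ m) : BicycleFree G (k + 1) := hbf.mono (Nat.succ_le_succ hk)
  have hmono : (gBall G v m).ncard ≤ (gBall G v (m + 1)).ncard :=
    Set.ncard_le_ncard (gBall_subset_gBall m.le_succ) (Set.toFinite _)
  calc (1 - δ) * Real.exp (δ * m)
      ≤ Real.exp (δ * m) * degreePotential G δ (gBall G v 0).toFinset := by
        rw [mul_comm]
        gcongr
        exact hG.le_degreePotential_gBall_zero hδ0 v
    _ ≤ (gBall G v (m + 1)).ncard :=
        exp_mul_le_of_recurrence hδ0 hδ1 (b := fun k => (gBall G v k).ncard)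
          (Z := fun k => degreePotential G δ (gBall G v k).toFinset)
          (fun _ => Nat.cast_nonneg _) (Nat.cast_le.2 hmono)
          (fun k hk => hG.degreePotential_gBall_add_le hδ0 (hbf' k hk.le) v)
          fun k hk => (hbf' k hk).degreePotential_gBall_le hδ0 v

end Growth

/-! ### Density of small subgraphs -/

section Density

variable {V : Type*} {G : SimpleGraph V} {δ : ℝ} {r : ℕ}

lemma edgeExpanding_of_minimal [Finite V] {c : ℝ} (hG : c * Nat.card V < G.edgeSet.ncard)
    (hmin : ∀ S : Set V, S ≠ Set.univ → ((edgesWithin G S).ncard : ℝ) ≤ c * S.ncard) :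
    EdgeExpanding G c := by
  intro S hS
  have hsplit : (G.edgeSet.ncard : ℝ) = (edgesMeeting G S).ncard + (edgesWithin G (↑S)ᶜ).ncard :=
    mod_cast ncard_edgeSet_eq_edgesMeeting_add_edgesWithin_compl G S
  have hcard : (Nat.card V : ℝ) = #S + (↑S : Set V)ᶜ.ncard := by
    rw [← Set.ncard_coe_finset]
    exact_mod_cast (Set.ncard_add_ncard_compl (S : Set V)).symm
  have hcompl := hmin (↑S)ᶜ (by simpa using hS.ne_empty)
  rw [hsplit, hcard] at hG
  linarith

lemma EdgeExpanding.exp_lt_card [Finite V] [Nonempty V] (hδ0 : 0 ≤ δ) (hδ1 : δ ≤ 1 / 10)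
    (hG : EdgeExpanding G (1 + δ)) (hbf : BicycleFree G r) :
    Real.exp (δ * r - 1) < Nat.card V := by
  obtain ⟨v⟩ := ‹Nonempty V›
  obtain _ | m := r
  · have hpos : (1 : ℝ) ≤ Nat.card V := mod_cast Nat.card_pos
    exact (Real.exp_lt_one_iff.2 (by norm_num)).trans_le hpos
  · have hlt : Real.exp (δ - 1) < 1 - δ := by
      have h := Real.add_one_le_exp (1 - δ)
      rw [← neg_sub, Real.exp_neg, inv_lt_comm₀ (Real.exp_pos _) (by linarith)]
      refine lt_of_lt_of_le ?_ h
      rw [inv_lt_iff_one_lt_mul₀ (by linarith)]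
      nlinarith
    calc Real.exp (δ * (m + 1 : ℕ) - 1)
        = Real.exp (δ - 1) * Real.exp (δ * m) := by
          rw [← Real.exp_add]
          push_cast
          ring_nf
      _ < (1 - δ) * Real.exp (δ * m) := by gcongr
      _ ≤ (gBall G v (m + 1)).ncard := hG.exp_mul_le_ncard_gBall hδ0 hδ1 hbf v
      _ ≤ Nat.card V := mod_cast Set.ncard_le_card _

theorem BicycleFree.ncard_edgeSet_le [Finite V] (hδ0 : 0 ≤ δ) (hδ1 : δ ≤ 1 / 10)
    (hG : BicycleFree G r) (hcard : (Nat.card V : ℝ) ≤ Real.exp (δ * r - 1)) :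
    (G.edgeSet.ncard : ℝ) ≤ (1 + δ) * Nat.card V := by
  induction hN : Nat.card V using Nat.strong_induction_on generalizing V G with | _ N ih
  subst hN
  have := Fintype.ofFinite V
  by_contra! hdense
  have : Nonempty V := by
    by_contra hempty
    rw [not_nonempty_iff] at hempty
    simp [Set.eq_empty_of_isEmpty] at hdense
  have hexpand : EdgeExpanding G (1 + δ) := by
    refine edgeExpanding_of_minimal hdense fun S hS => ?_
    have hlt : Nat.card S < Nat.card V := by
      rw [Nat.card_coe_set_eq, ← Set.ncard_univ]
      exact Set.ncard_lt_ncard (Set.ssubset_univ_iff.2 hS)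
    rw [← ncard_edgeSet_induce]
    exact ih _ hlt (hG.of_injective (SimpleGraph.Embedding.induce S).toHom Subtype.val_injective)
      ((Nat.cast_le.2 hlt.le).trans hcard) rfl
  exact (hexpand.exp_lt_card hδ0 hδ1 hG).not_ge hcard

end Density

/-! ### Counting vertices of large degree -/

section ExcessSet

variable {V : Type*} {G : SimpleGraph V}

lemma card_two_lt_degree_add_le [Fintype V] (hG : ∀ v, G.degree v ≠ 0) :
    #{v | 2 < G.degree v} + 2 * Fintype.card V ≤ 2 * #G.edgeFinset + #{v | G.degree v = 1} := by
  rw [← G.sum_degrees_eq_twice_card_edges, Finset.card_filter, Finset.card_filter,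
    ← Finset.card_univ, mul_comm, ← smul_eq_mul, ← Finset.sum_const, ← Finset.sum_add_distrib,
    ← Finset.sum_add_distrib]
  refine Finset.sum_le_sum fun v _ => ?_
  have := hG v
  split_ifs <;> omega

lemma degree_induce_support (H : G.Subgraph) [Fintype H.support] (v : H.support) :
    (H.spanningCoe.induce H.support).degree v = (H.neighborSet v).ncard := by
  rw [← SimpleGraph.card_neighborFinset_eq_degree, ← Set.ncard_coe_finset,
    SimpleGraph.coe_neighborFinset, ← Set.ncard_image_of_injective _ Subtype.val_injective]
  congr 1
  ext w
  simp only [Set.mem_image, SimpleGraph.mem_neighborSet, Subtype.exists]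
  exact ⟨fun ⟨_, _, h, hw⟩ => hw ▸ h, fun h => ⟨w, H.mem_support.2 ⟨v, h.symm⟩, h, rfl⟩⟩

lemma ncard_verts_eq_card_induce_support (H : G.Subgraph) [Fintype H.support] {p : ℕ → Prop}
    [DecidablePred p] (hp : ¬ p 0) :
    {v ∈ H.verts | p (H.neighborSet v).ncard}.ncard =
      #{v | p ((H.spanningCoe.induce H.support).degree v)} := by
  rw [← Set.ncard_coe_finset, ← Set.ncard_image_of_injective _ Subtype.val_injective]
  congr 1
  ext v
  simp only [Finset.coe_filter_univ, Set.mem_image, Set.mem_ofPred_eq, degree_induce_support,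
    Subtype.exists, exists_and_left, exists_prop, exists_eq_right_right]
  refine and_comm.trans (and_congr_right fun hpv =>
    ⟨fun _ => ?_, fun h => H.support_subset_verts h⟩)
  have hne : (H.neighborSet v).Nonempty := Set.nonempty_of_ncard_ne_zero fun h => hp (h ▸ hpv)
  exact H.mem_support.2 hne

theorem stmt7_general {r : ℕ} [G.LocallyFinite] (hbf : BicycleFree G r) {δ : ℝ} (hδ0 : 0 ≤ δ)
    (hδ1 : δ ≤ 1 / 10) (H : G.Subgraph) (hfin : H.verts.Finite)
    (hverts : (H.verts.ncard : ℝ) ≤ Real.exp (δ * r - 1)) :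
    ({v ∈ H.verts | 2 < (H.neighborSet v).ncard}.ncard : ℝ) ≤
      2 * δ * Real.exp (δ * r - 1) + {v ∈ H.verts | (H.neighborSet v).ncard = 1}.ncard := by
  have := (hfin.subset H.support_subset_verts).fintype
  set K := H.spanningCoe.induce H.support
  have hK : BicycleFree K r :=
    hbf.of_injective ⟨Subtype.val, fun h => H.adj_sub h⟩ Subtype.val_injective
  have hcard : (Nat.card H.support : ℝ) ≤ Real.exp (δ * r - 1) :=
    (Nat.cast_le.2 (Set.ncard_le_ncard H.support_subset_verts hfin)).trans hverts
  have hdense : (#K.edgeFinset : ℝ) ≤ (1 + δ) * Nat.card H.support := by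
    simpa [← Set.ncard_coe_finset] using hK.ncard_edgeSet_le hδ0 hδ1 hcard
  have hdeg (v : H.support) : K.degree v ≠ 0 := by
    obtain ⟨w, hw⟩ := H.mem_support.1 v.2
    exact ((K.degree_pos_iff_exists_adj v).2 ⟨⟨w, H.mem_support.2 ⟨v, hw.symm⟩⟩, hw⟩).ne'
  have hcount : (#{v | 2 < K.degree v} : ℝ) + 2 * Nat.card H.support ≤
      2 * #K.edgeFinset + #{v | K.degree v = 1} := by
    rw [Nat.card_eq_fintype_card]
    exact_mod_cast card_two_lt_degree_add_le hdeg
  rw [ncard_verts_eq_card_induce_support H (p := (2 < ·)) (by simp),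
    ncard_verts_eq_card_induce_support H (p := (· = 1)) (by simp)]
  have hδcard := mul_le_mul_of_nonneg_left hcard hδ0
  linarith

end ExcessSet

/-- Bound on the number of vertices of degree `> 2` (the excess set) in a connected
subgraph, with at most two vertices of degree one and at most `n₀ = e^(δr - 1)` vertices,
of a `d`-regular graph that is bicycle-free at radius `r`. -/
theorem stmt7 {n d r : ℕ} (G : SimpleGraph (Fin n)) (hreg : G.IsRegularOfDegree d)
    (hbf : BicycleFree G r) {δ : ℝ} (hδ0 : 0 < δ) (hδ1 : δ ≤ 1 / 10)
    (H : G.Subgraph) (hHconn : H.Connected)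
    (hdeg1 : {v ∈ H.verts | (H.neighborSet v).ncard = 1}.ncard ≤ 2)
    (hverts : (H.verts.ncard : ℝ) ≤ Real.exp (δ * r - 1)) :
    ({v ∈ H.verts | 2 < (H.neighborSet v).ncard}.ncard : ℝ)
      ≤ 2 * δ * Real.exp (δ * r - 1) + 2 := by
  have hdeg1' : ({v ∈ H.verts | (H.neighborSet v).ncard = 1}.ncard : ℝ) ≤ 2 := mod_cast hdeg1
  linarith [stmt7_general hbf hδ0.le hδ1 H H.verts.toFinite hverts]
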